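/- Let φ(x,t) = t^p + a(x) t^q with 1 < p < q < ∞, a a nonnegative function in C^{0,α}(ℝⁿ) for some α ∈ (0,1], and assume q/p ≤ 1 + α/n. Let Ω ⊆ ℝⁿ be open and suppose ℝⁿ∖Ω is locally uniformly infimally φ-fat with parameters c_fat > 0 and 0 < r_o ≤ 1. Then there is a constant c = c(n,p,q,c_fat) such that for every z ∈ ℝⁿ∖Ω, every 0 < r < r_o in the (p,q)-phase, i.e. with inf_{B(z,r)} a > [a]_{0,α} r^α, and every u ∈ Lip_0(Ω): ⨍_{B(z,r)} φ(x,|u(x)|) dx ≤ c · ⨍_{B(z,r)} φ(x, r|∇u(x)|) dx. -/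

import Mathlib

open MeasureTheory Metric Set

noncomputable section

/-- Euclidean space `ℝⁿ`. -/
abbrev En (n : ℕ) : Type := EuclideanSpace ℝ (Fin n)

/-- Norm of the (a.e. defined, by Rademacher's theorem) gradient of `u` at `x`. -/
def gnorm {n : ℕ} (u : En n → ℝ) (x : En n) : ℝ := ‖fderiv ℝ u x‖

/-- Admissible test functions for the level-`t` capacity of `E` in `O`:
Lipschitz on the closure of `O`, `u ≥ t` on `E`, `u = 0` on `∂O`. -/
def Adm {n : ℕ} (E O : Set (En n)) (t : ℝ) : Set (En n → ℝ) :=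
  {u | (∃ K, LipschitzOnWith K u (closure O)) ∧ (∀ x ∈ E, t ≤ u x) ∧
    ∀ x ∈ frontier O, u x = 0}

/-- Level-`t` variational capacity with integrand `ψ` and normalization `ψm`. -/
def capLevel {n : ℕ} (ψ : En n → ℝ → ℝ) (ψm : ℝ → ℝ)
    (E O : Set (En n)) (t : ℝ) : ℝ :=
  sInf ((fun u => ∫ x in O, ψ x (gnorm u x) / ψm t) '' Adm E O t)

/-- Infimal capacity with integrand `ψ` and normalization `ψm`. -/
def capInfGen {n : ℕ} (ψ : En n → ℝ → ℝ) (ψm : ℝ → ℝ) (E O : Set (En n)) : ℝ :=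
  ⨅ t : Ioi (0 : ℝ), capLevel ψ ψm E O (t : ℝ)

/-- The double-phase integrand `φ(x,t) = t^p + a(x) t^q`. -/
def phi {n : ℕ} (a : En n → ℝ) (p q : ℝ) (x : En n) (t : ℝ) : ℝ :=
  t ^ p + a x * t ^ q

/-- `a_O^- = inf_{x ∈ O} a(x)`. -/
def aInfOn {n : ℕ} (a : En n → ℝ) (O : Set (En n)) : ℝ := sInf (a '' O)

/-- `a_O^+ = sup_{x ∈ O} a(x)`. -/
def aSupOn {n : ℕ} (a : En n → ℝ) (O : Set (En n)) : ℝ := sSup (a '' O)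

/-- `φ_O^-(t) = t^p + a_O^- t^q`. -/
def phiMinus {n : ℕ} (a : En n → ℝ) (p q : ℝ) (O : Set (En n)) (t : ℝ) : ℝ :=
  t ^ p + aInfOn a O * t ^ q

/-- Level-`t` variational capacity for the double-phase integrand. -/
def capPhiLevel {n : ℕ} (a : En n → ℝ) (p q t : ℝ) (E O : Set (En n)) : ℝ :=
  capLevel (phi a p q) (phiMinus a p q O) E O t

/-- Infimal `φ`-capacity. -/
def capPhiInf {n : ℕ} (a : En n → ℝ) (p q : ℝ) (E O : Set (En n)) : ℝ :=
  ⨅ t : Ioi (0 : ℝ), capPhiLevel a p q (t : ℝ) E O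

/-- Variational `p`-capacity. -/
def capP {n : ℕ} (p : ℝ) (E O : Set (En n)) : ℝ :=
  sInf ((fun u => ∫ x in O, gnorm u x ^ p) '' Adm E O 1)

/-- The rescaled set `{x ∈ B̄(0,1/2) : z + r x ∈ E}`. -/
def shiftedSet {n : ℕ} (E : Set (En n)) (z : En n) (r : ℝ) : Set (En n) :=
  {x ∈ closedBall (0 : En n) (1 / 2) | z + r • x ∈ E}

/-- Local uniform infimal `φ`-fatness with parameters `cfat` and `ro`. -/
def LocUnifPhiFat {n : ℕ} (a : En n → ℝ) (p q : ℝ) (E : Set (En n))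
    (cfat ro : ℝ) : Prop :=
  ∀ z ∈ E, ∀ r : ℝ, 0 < r → r < ro →
    cfat ≤ capPhiInf (fun x => a (z + r • x)) p q (shiftedSet E z r) (ball (0 : En n) 1)

/-- Local uniform `p`-fatness with parameters `cfat` and `ro`. -/
def LocUnifPFat {n : ℕ} (p : ℝ) (E : Set (En n)) (cfat ro : ℝ) : Prop :=
  ∀ z ∈ E, ∀ r : ℝ, 0 < r → r < ro →
    cfat ≤ capP p (shiftedSet E z r) (ball (0 : En n) 1)

/-- `Lip_0(Ω)`: Lipschitz functions with compact support contained in `Ω`,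
extended by zero to `ℝⁿ`. -/
def Lip0 {n : ℕ} (Ω : Set (En n)) : Set (En n → ℝ) :=
  {u | (∃ K, LipschitzWith K u) ∧ HasCompactSupport u ∧ tsupport u ⊆ Ω}

/-- Restricted centered maximal operator `M_R f(x) = sup_{0<r<R} ⨍_{B(x,r)} |f|`. -/
def maxOp {n : ℕ} (R : ℝ) (f : En n → ℝ) (x : En n) : ℝ :=
  ⨆ r : Ioo (0 : ℝ) R, ⨍ y in ball x (r : ℝ), |f y|

lemma measurable_gnorm {n : ℕ} (v : En n → ℝ) : Measurable (gnorm v) :=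
  (measurable_fderiv ℝ v).norm

lemma gnorm_nonneg {n : ℕ} (v : En n → ℝ) (x : En n) : 0 ≤ gnorm v x := norm_nonneg _

lemma gnorm_le_of_lipschitzWith {n : ℕ} {v : En n → ℝ} {K : NNReal} (hv : LipschitzWith K v)
    (x : En n) : gnorm v x ≤ K := norm_fderiv_le_of_lipschitz ℝ hv

lemma abs_sub_le_of_lipschitzWith_of_mem_closedBall {n : ℕ} {v : En n → ℝ} {K : NNReal}
    (hv : LipschitzWith K v) (d : ℝ) {x : En n} (hx : x ∈ closedBall 0 1) :
    |v x - d| ≤ |v 0 - d| + K := by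
  have h1 : |v x - v 0| ≤ K * ‖x‖ := by
    simpa [Real.dist_eq, dist_eq_norm] using hv.dist_le_mul x 0
  have h2 := abs_sub_le (v x) (v 0) d
  have h3 : (K : ℝ) * ‖x‖ ≤ K := mul_le_of_le_one_right K.2 (mem_closedBall_zero_iff.1 hx)
  linarith

lemma hasDerivAt_segment {n : ℕ} (x y : En n) (t : ℝ) :
    HasDerivAt (fun t : ℝ => (1 - t) • x + t • y) (y - x) t := by
  have h := (((hasDerivAt_id t).const_sub 1).smul_const x).add ((hasDerivAt_id t).smul_const y)
  convert! h using 1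
  simp only [neg_smul, one_smul]
  abel

/-- The increment of a Lipschitz function along a segment is controlled by its gradient, provided
the function is differentiable at almost every point of the segment. -/
lemma abs_sub_le_integral_gnorm {n : ℕ} {v : En n → ℝ} {K : NNReal} (hv : LipschitzWith K v)
    {x y : En n}
    (hd : ∀ᵐ t : ℝ ∂(volume.restrict (Ioc 0 1)), DifferentiableAt ℝ v ((1 - t) • x + t • y)) :
    |v y - v x| ≤
      ∫ t in Ioc (0 : ℝ) 1, dist x y * gnorm v ((1 - t) • x + t • y) := by
  set g : ℝ → ℝ := fun t => v ((1 - t) • x + t • y) with hg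
  have hlip : LipschitzWith (K * nndist x y) g := by
    refine LipschitzWith.of_dist_le_mul fun s t => ?_
    refine (hv.dist_le_mul _ _).trans ?_
    have : dist ((1 - s) • x + s • y) ((1 - t) • x + t • y) = dist x y * dist s t := by
      rw [dist_eq_norm, dist_eq_norm, dist_eq_norm,
        show (1 - s) • x + s • y - ((1 - t) • x + t • y) = (t - s) • (x - y) by module,
        norm_smul, ← norm_neg (t - s), neg_sub, mul_comm]
    rw [this]
    simp [mul_assoc]
  have hftc :=
    (hlip.lipschitzOnWith (s := uIcc 0 1)).absolutelyContinuousOnInterval.integral_deriv_eq_sub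
  have h01 : g 1 - g 0 = v y - v x := by simp [hg]
  rw [← h01, ← hftc, intervalIntegral.integral_of_le zero_le_one, ← Real.norm_eq_abs]
  refine norm_integral_le_of_norm_le ?_ ?_
  · refine (Measure.integrableOn_of_bounded (M := dist x y * K) (by simp) ?_ ?_)
    · exact ((measurable_const.mul ((measurable_gnorm v).comp (by fun_prop)))).aestronglyMeasurable
    · refine Filter.Eventually.of_forall fun t => ?_
      rw [Real.norm_of_nonneg (mul_nonneg dist_nonneg (gnorm_nonneg _ _))]
      exact mul_le_mul_of_nonneg_left (gnorm_le_of_lipschitzWith hv _) dist_nonneg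
  · filter_upwards [hd] with t ht
    have := ht.hasFDerivAt.comp_hasDerivAt t (hasDerivAt_segment x y t)
    rw [show deriv g t = _ from this.deriv, mul_comm, dist_comm, dist_eq_norm]
    exact ContinuousLinearMap.le_opNorm _ _

/-- Jensen's inequality applied to the increment of a Lipschitz function along a segment. -/
lemma ofReal_convex_abs_sub_le_lintegral {n : ℕ} {v : En n → ℝ} {K : NNReal}
    (hv : LipschitzWith K v) {Ψ : ℝ → ℝ} (hconv : ConvexOn ℝ (Ici 0) Ψ)
    (hcont : Continuous Ψ) (hmono : MonotoneOn Ψ (Ici 0)) (hΨ0 : ∀ t, 0 ≤ t → 0 ≤ Ψ t)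
    {D : ℝ} {x y : En n} (hxy : dist x y ≤ D)
    (hd : ∀ᵐ t : ℝ ∂(volume.restrict (Ioc 0 1)), DifferentiableAt ℝ v ((1 - t) • x + t • y)) :
    ENNReal.ofReal (Ψ |v y - v x|) ≤
      ∫⁻ t in Ioc (0 : ℝ) 1, ENNReal.ofReal (Ψ (D * gnorm v ((1 - t) • x + t • y))) := by
  have hD : 0 ≤ D := dist_nonneg.trans hxy
  set h : ℝ → ℝ := fun t => D * gnorm v ((1 - t) • x + t • y) with hh
  have hmeas : Measurable h := measurable_const.mul ((measurable_gnorm v).comp (by fun_prop))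
  have h0 : ∀ t, 0 ≤ h t := fun t => mul_nonneg hD (gnorm_nonneg _ _)
  have hb : ∀ t, h t ≤ D * K := fun t =>
    mul_le_mul_of_nonneg_left (gnorm_le_of_lipschitzWith hv _) hD
  have : IsProbabilityMeasure (volume.restrict (Ioc (0 : ℝ) 1)) := ⟨by simp⟩
  have hint : IntegrableOn h (Ioc 0 1) :=
    Measure.integrableOn_of_bounded (M := D * K) (by simp) hmeas.aestronglyMeasurable
      (Filter.Eventually.of_forall fun t => by rw [Real.norm_of_nonneg (h0 t)]; exact hb t)
  have hintΨ : IntegrableOn (Ψ ∘ h) (Ioc 0 1) :=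
    Measure.integrableOn_of_bounded (M := Ψ (D * K)) (by simp)
      (hcont.measurable.comp hmeas).aestronglyMeasurable
      (Filter.Eventually.of_forall fun t => by
        rw [Function.comp, Real.norm_of_nonneg (hΨ0 _ (h0 t))]
        exact hmono (h0 t) ((h0 t).trans (hb t)) (hb t))
  have h1 : |v y - v x| ≤ ∫ t in Ioc (0 : ℝ) 1, h t := by
    refine (abs_sub_le_integral_gnorm hv hd).trans ?_
    refine integral_mono_of_nonneg
      (Filter.Eventually.of_forall fun t => mul_nonneg dist_nonneg (gnorm_nonneg _ _)) hint
      (Filter.Eventually.of_forall fun t => mul_le_mul_of_nonneg_right hxy (gnorm_nonneg _ _))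
  have h2 : Ψ |v y - v x| ≤ ∫ t in Ioc (0 : ℝ) 1, Ψ (h t) :=
    (hmono (mem_Ici.2 (abs_nonneg _)) (mem_Ici.2 ((abs_nonneg _).trans h1)) h1).trans
      (hconv.map_integral_le hcont.continuousOn isClosed_Ici
        (Filter.Eventually.of_forall h0) hint hintΨ)
  refine (ENNReal.ofReal_le_ofReal h2).trans ?_
  exact (ofReal_integral_eq_lintegral_ofReal hintΨ
    (Filter.Eventually.of_forall fun t => hΨ0 _ (h0 t))).le

/-- Change of variables for the homothety `y ↦ b + c • y`. -/
lemma lintegral_comp_add_smul {n : ℕ} {f : En n → ENNReal} (hf : Measurable f) (b : En n)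
    {c : ℝ} (hc : 0 < c) :
    ∫⁻ y, f (b + c • y) = ENNReal.ofReal ((c ^ n)⁻¹) * ∫⁻ y, f y := by
  have h1 : ∫⁻ y, f (b + c • y) = ∫⁻ y, f (b + y) ∂(Measure.map (c • ·) volume) := by
    rw [lintegral_map (by fun_prop) (by fun_prop)]
  rw [h1, Measure.map_addHaar_smul _ hc.ne', lintegral_smul_measure,
    lintegral_add_left_eq_self f b, smul_eq_mul, abs_of_pos (by positivity)]
  simp

lemma ae_ae_differentiableAt_segment {n : ℕ} {v : En n → ℝ} {K : NNReal}
    (hv : LipschitzWith K v) (x : En n) :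
    ∀ᵐ y : En n, ∀ᵐ t : ℝ ∂(volume.restrict (Ioc 0 1)),
      DifferentiableAt ℝ v ((1 - t) • x + t • y) := by
  have hS := measurableSet_of_differentiableAt ℝ v
  refine (Measure.ae_ae_comm ?_).1 ?_
  · exact (show Measurable fun p : ℝ × En n => (1 - p.1) • x + p.1 • p.2 by fun_prop) hS
  · refine (ae_restrict_iff' measurableSet_Ioc).2 (Filter.Eventually.of_forall fun t ht => ?_)
    have hnull : ∫⁻ y, ({z | DifferentiableAt ℝ v z}ᶜ).indicator 1 ((1 - t) • x + t • y) = 0 := by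
      rw [lintegral_comp_add_smul (measurable_one.indicator hS.compl) _ ht.1,
        lintegral_indicator_one hS.compl]
      have : volume {z | DifferentiableAt ℝ v z}ᶜ = 0 := hv.ae_differentiableAt
      rw [this, mul_zero]
    have hm : Measurable fun y : En n =>
        ({z | DifferentiableAt ℝ v z}ᶜ).indicator (1 : En n → ENNReal) ((1 - t) • x + t • y) :=
      (measurable_one.indicator hS.compl).comp (by fun_prop)
    rw [lintegral_eq_zero_iff hm] at hnull
    filter_upwards [hnull] with y hy
    by_contra hcon
    rw [Pi.zero_apply, indicator_of_mem (show _ ∈ {z | DifferentiableAt ℝ v z}ᶜ from hcon)] at hy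
    simp at hy

lemma setLIntegral_comp_segment_le {n : ℕ} {g : En n → ENNReal} (hg : Measurable g)
    {B : Set (En n)} (hB : MeasurableSet B) (hconv : Convex ℝ B) {x : En n} (hx : x ∈ B)
    {c : ℝ} (hc : 1 / 2 ≤ c) (hc1 : c ≤ 1) :
    ∫⁻ y in B, g ((1 - c) • x + c • y) ≤ 2 ^ n * ∫⁻ y in B, g y := by
  have hc0 : 0 < c := by linarith
  rw [← lintegral_indicator hB, ← lintegral_indicator hB]
  calc ∫⁻ y, B.indicator (fun y => g ((1 - c) • x + c • y)) y
      ≤ ∫⁻ y, B.indicator g ((1 - c) • x + c • y) := by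
        refine lintegral_mono fun y => ?_
        refine indicator_apply_le' (fun hy => ?_) (fun _ => zero_le)
        rw [indicator_of_mem (hconv hx hy (by linarith) hc0.le (by ring))]
    _ = ENNReal.ofReal ((c ^ n)⁻¹) * ∫⁻ y, B.indicator g y :=
        lintegral_comp_add_smul (hg.indicator hB) _ hc0
    _ ≤ 2 ^ n * ∫⁻ y, B.indicator g y := by
        gcongr
        rw [← inv_pow, show (2 : ENNReal) ^ n = ENNReal.ofReal (2 ^ n) by
          rw [ENNReal.ofReal_pow (by norm_num)]; norm_num]
        refine ENNReal.ofReal_le_ofReal (pow_le_pow_left₀ (by positivity) ?_ n)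
        rw [inv_le_comm₀ hc0 (by norm_num)]
        linarith

/-- A modular double-integral Poincaré inequality on convex sets, for Lipschitz functions. -/
lemma lintegral_lintegral_convex_abs_sub_le {n : ℕ} {v : En n → ℝ} {K : NNReal}
    (hv : LipschitzWith K v) {Ψ : ℝ → ℝ} (hconv : ConvexOn ℝ (Ici 0) Ψ)
    (hcont : Continuous Ψ) (hmono : MonotoneOn Ψ (Ici 0)) (hΨ0 : ∀ t, 0 ≤ t → 0 ≤ Ψ t)
    {B : Set (En n)} (hB : MeasurableSet B) (hBconv : Convex ℝ B)
    {D : ℝ} (hD : ∀ x ∈ B, ∀ y ∈ B, dist x y ≤ D) :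
    ∫⁻ x in B, ∫⁻ y in B, ENNReal.ofReal (Ψ |v y - v x|) ≤
      2 ^ n * volume B * ∫⁻ x in B, ENNReal.ofReal (Ψ (D * gnorm v x)) := by
  set g : En n → ENNReal := fun x => ENNReal.ofReal (Ψ (D * gnorm v x)) with hg
  have hgm : Measurable g :=
    (hcont.measurable.comp (measurable_const.mul (measurable_gnorm v))).ennreal_ofReal
  have hfix : ∀ t ∈ Ioc (0 : ℝ) 1, ∫⁻ x in B, ∫⁻ y in B, g ((1 - t) • x + t • y) ≤
      2 ^ n * volume B * ∫⁻ x in B, g x := by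
    intro t ht
    have key : ∀ c : ℝ, 1 / 2 ≤ c → c ≤ 1 →
        ∫⁻ x in B, ∫⁻ y in B, g ((1 - c) • x + c • y) ≤ 2 ^ n * volume B * ∫⁻ x in B, g x := by
      intro c hc hc1
      refine (setLIntegral_mono' hB fun x hx =>
        setLIntegral_comp_segment_le hgm hB hBconv hx hc hc1).trans ?_
      rw [setLIntegral_const]
      exact le_of_eq (by ring)
    rcases le_total (1 / 2) t with h | h
    · exact key t h ht.2
    · rw [lintegral_lintegral_swap]
      · refine le_trans (le_of_eq ?_) (key (1 - t) (by linarith) (by linarith [ht.1]))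
        refine lintegral_congr fun y => lintegral_congr fun x => ?_
        rw [sub_sub_cancel, add_comm]
      · exact (hgm.comp (by fun_prop)).aemeasurable
  calc ∫⁻ x in B, ∫⁻ y in B, ENNReal.ofReal (Ψ |v y - v x|)
      ≤ ∫⁻ x in B, ∫⁻ y in B, ∫⁻ t in Ioc (0 : ℝ) 1, g ((1 - t) • x + t • y) := by
        refine setLIntegral_mono' hB fun x hx => lintegral_mono_ae ?_
        filter_upwards [ae_restrict_mem hB,
          ae_restrict_of_ae (ae_ae_differentiableAt_segment hv x)] with y hy hd
        exact ofReal_convex_abs_sub_le_lintegral hv hconv hcont hmono hΨ0 (hD x hx y hy) hd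
    _ = ∫⁻ x in B, ∫⁻ t in Ioc (0 : ℝ) 1, ∫⁻ y in B, g ((1 - t) • x + t • y) := by
        refine lintegral_congr fun x => lintegral_lintegral_swap ?_
        exact (hgm.comp (by fun_prop)).aemeasurable
    _ = ∫⁻ t in Ioc (0 : ℝ) 1, ∫⁻ x in B, ∫⁻ y in B, g ((1 - t) • x + t • y) := by
        refine lintegral_lintegral_swap ?_
        refine Measurable.aemeasurable ?_
        refine Measurable.lintegral_prod_right' (f := fun p : (En n × ℝ) × En n =>
          g ((1 - p.1.2) • p.1.1 + p.1.2 • p.2)) (hgm.comp (by fun_prop))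
    _ ≤ ∫⁻ _ in Ioc (0 : ℝ) 1, 2 ^ n * volume B * ∫⁻ x in B, g x :=
        setLIntegral_mono' measurableSet_Ioc hfix
    _ = 2 ^ n * volume B * ∫⁻ x in B, g x := by simp

section PhiMinus

variable {n : ℕ} {b : En n → ℝ} {p q : ℝ} {O : Set (En n)}

lemma phiMinus_nonneg (h0 : 0 ≤ aInfOn b O) {t : ℝ} (ht : 0 ≤ t) : 0 ≤ phiMinus b p q O t := by
  unfold phiMinus; positivity

lemma convexOn_phiMinus (h0 : 0 ≤ aInfOn b O) (hp : 1 ≤ p) (hq : 1 ≤ q) :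
    ConvexOn ℝ (Ici 0) (phiMinus b p q O) :=
  (convexOn_rpow hp).add ((convexOn_rpow hq).smul h0)

lemma continuous_phiMinus (hp : 0 ≤ p) (hq : 0 ≤ q) : Continuous (phiMinus b p q O) :=
  (Real.continuous_rpow_const hp).add (continuous_const.mul (Real.continuous_rpow_const hq))

lemma monotoneOn_phiMinus (h0 : 0 ≤ aInfOn b O) (hp : 0 ≤ p) (hq : 0 ≤ q) :
    MonotoneOn (phiMinus b p q O) (Ici 0) := by
  intro s hs t _ hst
  rw [mem_Ici] at hs
  unfold phiMinus
  gcongr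

lemma phiMinus_mul_le (hpq : p ≤ q) {c t : ℝ} (hc : 1 ≤ c) (ht : 0 ≤ t) :
    phiMinus b p q O (c * t) ≤ c ^ q * phiMinus b p q O t := by
  have h1 : c ^ p ≤ c ^ q := Real.rpow_le_rpow_of_exponent_le hc hpq
  have h2 : 0 ≤ t ^ p := Real.rpow_nonneg ht _
  unfold phiMinus
  rw [Real.mul_rpow (by linarith) ht, Real.mul_rpow (by linarith) ht]
  nlinarith [mul_le_mul_of_nonneg_right h1 h2]

lemma phiMinus_add_le (h0 : 0 ≤ aInfOn b O) (hp : 0 ≤ p) (hq : 0 ≤ q) {s t : ℝ}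
    (hs : 0 ≤ s) (ht : 0 ≤ t) :
    phiMinus b p q O (s + t) ≤ phiMinus b p q O (2 * s) + phiMinus b p q O (2 * t) := by
  have hmono := monotoneOn_phiMinus (O := O) h0 hp hq
  have h1 : 0 ≤ phiMinus b p q O (2 * s) := phiMinus_nonneg h0 (by positivity)
  have h2 : 0 ≤ phiMinus b p q O (2 * t) := phiMinus_nonneg h0 (by positivity)
  rcases le_total s t with h | h
  · linarith [hmono (mem_Ici.2 (add_nonneg hs ht)) (mem_Ici.2 (by positivity : 0 ≤ 2 * t))
      (by linarith)]
  · linarith [hmono (mem_Ici.2 (add_nonneg hs ht)) (mem_Ici.2 (by positivity : 0 ≤ 2 * s))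
      (by linarith)]

lemma integrableOn_phiMinus_comp (h0 : 0 ≤ aInfOn b O) (hp : 0 ≤ p) (hq : 0 ≤ q)
    {B : Set (En n)} (hB : MeasurableSet B) (hBfin : volume B ≠ ⊤) {f : En n → ℝ}
    (hf : Measurable f) {M : ℝ} (hf0 : ∀ x ∈ B, 0 ≤ f x) (hfM : ∀ x ∈ B, f x ≤ M) :
    IntegrableOn (fun x => phiMinus b p q O (f x)) B := by
  refine Measure.integrableOn_of_bounded (M := phiMinus b p q O M) hBfin
    ((continuous_phiMinus hp hq).measurable.comp hf).aestronglyMeasurable ?_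
  filter_upwards [ae_restrict_mem hB] with x hx
  rw [Real.norm_of_nonneg (phiMinus_nonneg h0 (hf0 x hx))]
  exact monotoneOn_phiMinus h0 hp hq (hf0 x hx) ((hf0 x hx).trans (hfM x hx)) (hfM x hx)

end PhiMinus

lemma phi_nonneg {n : ℕ} {b : En n → ℝ} {p q : ℝ} {x : En n} (hb : 0 ≤ b x) {t : ℝ}
    (ht : 0 ≤ t) : 0 ≤ phi b p q x t := by
  unfold phi; positivity

lemma aInfOn_nonneg {n : ℕ} {b : En n → ℝ} (hb : ∀ x, 0 ≤ b x) (O : Set (En n)) :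
    0 ≤ aInfOn b O :=
  Real.sInf_nonneg (by rintro _ ⟨x, _, rfl⟩; exact hb x)

/-- A lower bound on the infimal capacity bounds the modular of every admissible function. -/
lemma mul_phiMinus_le_of_mem_Adm {n : ℕ} {b : En n → ℝ} {p q cfat t : ℝ} {E O : Set (En n)}
    (hb : ∀ x, 0 ≤ b x) (hfat : cfat ≤ capPhiInf b p q E O) (ht : 0 < t) {w : En n → ℝ}
    (hw : w ∈ Adm E O t) :
    cfat * phiMinus b p q O t ≤ ∫ x in O, phi b p q x (gnorm w x) := by
  have h0 := aInfOn_nonneg hb O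
  have hpos : 0 < phiMinus b p q O t :=
    add_pos_of_pos_of_nonneg (Real.rpow_pos_of_pos ht _)
      (mul_nonneg h0 (Real.rpow_nonneg ht.le _))
  have hint : ∀ s : ℝ, 0 < s → ∀ w : En n → ℝ,
      0 ≤ ∫ x in O, phi b p q x (gnorm w x) / phiMinus b p q O s := fun s hs w =>
    integral_nonneg fun x =>
      div_nonneg (phi_nonneg (hb x) (gnorm_nonneg _ _)) (phiMinus_nonneg h0 hs.le)
  have h1 : capPhiInf b p q E O ≤ capPhiLevel b p q t E O := by
    refine ciInf_le ⟨0, ?_⟩ (⟨t, ht⟩ : Ioi (0 : ℝ))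
    rintro _ ⟨s, rfl⟩
    refine Real.sInf_nonneg ?_
    rintro _ ⟨w, _, rfl⟩
    exact hint s s.2 w
  have h2 : capPhiLevel b p q t E O ≤
      ∫ x in O, phi b p q x (gnorm w x) / phiMinus b p q O t := by
    refine csInf_le ⟨0, ?_⟩ ⟨w, hw, rfl⟩
    rintro _ ⟨w, _, rfl⟩
    exact hint t ht w
  rw [integral_div] at h2
  exact (le_div_iff₀ hpos).1 (hfat.trans (h1.trans h2))

lemma hasFDerivAt_cutoff {n : ℕ} (x : En n) :
    HasFDerivAt (fun x : En n => 2 * (1 - ‖x‖ ^ 2)) ((2 : ℝ) • (-((2 : ℝ) • innerSL ℝ x))) x := by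
  have h := ((hasStrictFDerivAt_norm_sq x).hasFDerivAt.const_sub 1).const_mul (2 : ℝ)
  convert! h using 3
  ext y
  simp [two_mul]

lemma gnorm_cutoff_mul_le {n : ℕ} {v : En n → ℝ} {x : En n} (hx : ‖x‖ ≤ 1)
    (hd : DifferentiableAt ℝ v x) (d : ℝ) {s : ℝ} (hs : |s| = 1) :
    gnorm (fun x => 2 * (1 - ‖x‖ ^ 2) * (s * (d - v x))) x ≤
      2 * gnorm v x + 4 * |v x - d| := by
  have h := (hasFDerivAt_cutoff x).mul ((hd.hasFDerivAt.const_sub d).const_mul s)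
  unfold gnorm
  rw [show fderiv ℝ (fun x => 2 * (1 - ‖x‖ ^ 2) * (s * (d - v x))) x = _ from h.fderiv]
  have hx0 := norm_nonneg x
  refine (norm_add_le _ _).trans (add_le_add ?_ ?_)
  · rw [norm_smul, norm_smul, norm_neg, Real.norm_eq_abs s, hs, one_mul,
      Real.norm_of_nonneg (by nlinarith)]
    exact mul_le_mul_of_nonneg_right (by nlinarith) (norm_nonneg _)
  · rw [norm_smul, norm_smul, norm_neg, norm_smul, innerSL_apply_norm, norm_mul,
      Real.norm_eq_abs s, hs, one_mul, Real.norm_eq_abs, abs_sub_comm, Real.norm_ofNat]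
    nlinarith [mul_le_mul_of_nonneg_left hx (abs_nonneg (v x - d))]

lemma cutoff_mul_mem_Adm {n : ℕ} {v : En n → ℝ} {K : NNReal} (hv : LipschitzWith K v)
    {E : Set (En n)} (hE : E ⊆ closedBall 0 (1 / 2)) (hvE : ∀ x ∈ E, v x = 0)
    {d s : ℝ} (hs : |s| = 1) (hsd : s * d = |d|) :
    (fun x => 2 * (1 - ‖x‖ ^ 2) * (s * (d - v x))) ∈ Adm E (ball 0 1) |d| := by
  refine ⟨⟨2 * K + 4 * (‖d - v 0‖₊ + K), ?_⟩, fun x hx => ?_, fun x hx => ?_⟩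
  · rw [closure_ball _ one_ne_zero]
    refine LipschitzOnWith.of_dist_le_mul fun x hx y hy => ?_
    rw [mem_closedBall_zero_iff] at hx hy
    have h1 : |v x - v y| ≤ K * ‖x - y‖ := by
      simpa [Real.dist_eq, dist_eq_norm] using hv.dist_le_mul x y
    have h2 : |d - v y| ≤ |d - v 0| + K := by
      rw [abs_sub_comm, abs_sub_comm d]
      exact abs_sub_le_of_lipschitzWith_of_mem_closedBall hv d (mem_closedBall_zero_iff.2 hy)
    have h3 : |‖y‖ ^ 2 - ‖x‖ ^ 2| ≤ 2 * ‖x - y‖ := by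
      rw [sq_sub_sq, abs_mul, abs_of_nonneg (by positivity)]
      refine mul_le_mul (by linarith) ?_ (abs_nonneg _) (by norm_num)
      rw [norm_sub_rev]
      exact abs_norm_sub_norm_le y x
    have hx0 := norm_nonneg x
    have h4 : |2 * (1 - ‖x‖ ^ 2)| ≤ 2 := by
      rw [abs_of_nonneg (by nlinarith)]; nlinarith
    rw [Real.dist_eq, dist_eq_norm,
      show 2 * (1 - ‖x‖ ^ 2) * (s * (d - v x)) - 2 * (1 - ‖y‖ ^ 2) * (s * (d - v y)) =
        s * (-(2 * (1 - ‖x‖ ^ 2) * (v x - v y)) + 2 * (‖y‖ ^ 2 - ‖x‖ ^ 2) * (d - v y)) by ring,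
      abs_mul, hs, one_mul]
    refine (abs_add_le _ _).trans ?_
    rw [abs_neg, abs_mul, abs_mul (2 * (‖y‖ ^ 2 - ‖x‖ ^ 2)), abs_mul 2 (‖y‖ ^ 2 - ‖x‖ ^ 2), abs_two]
    push_cast
    rw [Real.norm_eq_abs]
    calc _ ≤ 2 * (K * ‖x - y‖) + 2 * (2 * ‖x - y‖) * (|d - v 0| + K) := by gcongr
      _ = _ := by ring
  · have hx' : ‖x‖ ≤ 1 / 2 := mem_closedBall_zero_iff.1 (hE hx)
    have hx0 := norm_nonneg x
    simp only [hvE x hx, sub_zero, hsd]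
    nlinarith [mul_le_mul_of_nonneg_right (by nlinarith : 1 ≤ 2 * (1 - ‖x‖ ^ 2)) (abs_nonneg d)]
  · rw [frontier_ball _ one_ne_zero, mem_sphere_zero_iff_norm] at hx
    simp [hx]

/-- Pointwise capacitary estimate: the value of `v` at any level `d` is controlled by its gradient
and by its deviation from `d`. -/
lemma mul_phiMinus_le_integral {n : ℕ} {b : En n → ℝ} {p q cfat : ℝ} {E : Set (En n)}
    (hp : 0 < p) (hq : 0 < q) (hb : ∀ x, 0 ≤ b x)
    (hb3 : ∀ x ∈ ball (0 : En n) 1, b x ≤ 3 * aInfOn b (ball 0 1))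
    (hE : E ⊆ closedBall 0 (1 / 2)) (hfat : cfat ≤ capPhiInf b p q E (ball 0 1))
    {v : En n → ℝ} {K : NNReal} (hv : LipschitzWith K v) (hvE : ∀ x ∈ E, v x = 0) (d : ℝ) :
    cfat * phiMinus b p q (ball 0 1) |d| ≤
      3 * ∫ x in ball (0 : En n) 1,
        phiMinus b p q (ball 0 1) (2 * gnorm v x + 4 * |v x - d|) := by
  have h0 := aInfOn_nonneg hb (ball 0 1)
  have harg : ∀ x, 0 ≤ 2 * gnorm v x + 4 * |v x - d| := fun x => by
    have := gnorm_nonneg v x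
    positivity
  rcases eq_or_ne d 0 with rfl | hd
  · have : phiMinus b p q (ball 0 1) |0| = 0 := by
      simp [phiMinus, Real.zero_rpow hp.ne', Real.zero_rpow hq.ne']
    rw [this, mul_zero]
    exact mul_nonneg (by norm_num) (integral_nonneg fun x => phiMinus_nonneg h0 (harg x))
  obtain ⟨s, hs, hsd⟩ : ∃ s : ℝ, |s| = 1 ∧ s * d = |d| := by
    rcases le_total 0 d with h | h
    · exact ⟨1, by simp, by rw [abs_of_nonneg h, one_mul]⟩
    · exact ⟨-1, by simp, by rw [abs_of_nonpos h, neg_one_mul]⟩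
  refine (mul_phiMinus_le_of_mem_Adm hb hfat (abs_pos.2 hd)
    (cutoff_mul_mem_Adm hv hE hvE hs hsd)).trans ?_
  rw [← integral_const_mul]
  refine integral_mono_of_nonneg
    (Filter.Eventually.of_forall fun x => phi_nonneg (hb x) (gnorm_nonneg _ _)) ?_ ?_
  · refine (integrableOn_phiMinus_comp h0 hp.le hq.le measurableSet_ball
      measure_ball_lt_top.ne (M := 2 * K + 4 * (|v 0 - d| + K))
      (((measurable_gnorm v).const_mul 2).add
        ((hv.continuous.measurable.sub_const d).abs.const_mul 4))
      (fun x _ => harg x) fun x hx => ?_).const_mul 3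
    have h1 := gnorm_le_of_lipschitzWith hv x
    have h2 := abs_sub_le_of_lipschitzWith_of_mem_closedBall hv d (ball_subset_closedBall hx)
    simp only [Pi.add_apply]
    linarith
  · filter_upwards [ae_restrict_mem measurableSet_ball,
      ae_restrict_of_ae hv.ae_differentiableAt] with x hx hdx
    have hg := gnorm_cutoff_mul_le (mem_ball_zero_iff.1 hx).le hdx d hs
    have hg0 := gnorm_nonneg (fun x => 2 * (1 - ‖x‖ ^ 2) * (s * (d - v x))) x
    refine le_trans ?_ (mul_le_mul_of_nonneg_left
      (monotoneOn_phiMinus h0 hp.le hq.le (mem_Ici.2 hg0) (mem_Ici.2 (harg x)) hg)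
      (by norm_num : (0 : ℝ) ≤ 3))
    unfold phi phiMinus
    nlinarith [Real.rpow_nonneg hg0 p,
      mul_le_mul_of_nonneg_right (hb3 x hx) (Real.rpow_nonneg hg0 q)]

/-- The constant in the boundary Poincaré inequality on the unit ball. -/
def poincareConst (n : ℕ) (q cfat : ℝ) : ℝ :=
  3 * (3 * 8 ^ q * (1 + 2 ^ n * 2 ^ q) * volume.real (ball (0 : En n) 1) / cfat)

lemma poincareConst_pos (n : ℕ) (q : ℝ) {cfat : ℝ} (hcfat : 0 < cfat) :
    0 < poincareConst n q cfat := by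
  have : 0 < volume.real (ball (0 : En n) 1) :=
    ENNReal.toReal_pos (measure_ball_pos _ _ one_pos).ne' measure_ball_lt_top.ne
  unfold poincareConst
  positivity

lemma integral_phiMinus_abs_le {n : ℕ} {b : En n → ℝ} {p q cfat : ℝ} {E : Set (En n)}
    (hp : 1 < p) (hpq : p < q) (hcfat : 0 < cfat) (hb : ∀ x, 0 ≤ b x)
    (hb3 : ∀ x ∈ ball (0 : En n) 1, b x ≤ 3 * aInfOn b (ball 0 1))
    (hE : E ⊆ closedBall 0 (1 / 2)) (hfat : cfat ≤ capPhiInf b p q E (ball 0 1))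
    {v : En n → ℝ} {K : NNReal} (hv : LipschitzWith K v) (hvE : ∀ x ∈ E, v x = 0) :
    cfat * ∫ x in ball (0 : En n) 1, phiMinus b p q (ball 0 1) |v x| ≤
      3 * 8 ^ q * (1 + 2 ^ n * 2 ^ q) * volume.real (ball (0 : En n) 1) *
        ∫ x in ball (0 : En n) 1, phiMinus b p q (ball 0 1) (gnorm v x) := by
  have hp0 : 0 < p := by linarith
  have hq0 : 0 < q := by linarith
  have h0 := aInfOn_nonneg hb (ball 0 1)
  set B := ball (0 : En n) 1 with hB
  set Ψ := phiMinus b p q B with hΨ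
  have hBm : MeasurableSet B := measurableSet_ball
  have hBfin : volume B ≠ ⊤ := measure_ball_lt_top.ne
  have hΨ0 : ∀ t, 0 ≤ t → 0 ≤ Ψ t := fun t ht => phiMinus_nonneg h0 ht
  have hΨc : Continuous Ψ := continuous_phiMinus hp0.le hq0.le
  have hgi : IntegrableOn (fun x => Ψ (gnorm v x)) B :=
    integrableOn_phiMinus_comp h0 hp0.le hq0.le hBm hBfin (measurable_gnorm v)
      (fun x _ => gnorm_nonneg v x) (fun x _ => gnorm_le_of_lipschitzWith hv x)
  have hdi : ∀ d, IntegrableOn (fun x => Ψ |v x - d|) B := fun d =>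
    integrableOn_phiMinus_comp h0 hp0.le hq0.le hBm hBfin
      (hv.continuous.measurable.sub_const d).abs (fun x _ => abs_nonneg _)
      fun x hx => abs_sub_le_of_lipschitzWith_of_mem_closedBall hv d (ball_subset_closedBall hx)
  have hvi : IntegrableOn (fun x => Ψ |v x|) B := by simpa using hdi 0
  have hpt : ∀ d, cfat * Ψ |d| ≤
      3 * 8 ^ q * (∫ x in B, Ψ (gnorm v x)) + 3 * 8 ^ q * ∫ x in B, Ψ |v x - d| := by
    intro d
    refine (mul_phiMinus_le_integral hp0 hq0 hb hb3 hE hfat hv hvE d).trans ?_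
    rw [mul_assoc, mul_assoc, ← mul_add]
    refine mul_le_mul_of_nonneg_left ?_ (by norm_num)
    rw [← mul_add, ← integral_add hgi (hdi d), ← integral_const_mul]
    refine integral_mono_of_nonneg (Filter.Eventually.of_forall fun x => hΨ0 _ ?_)
      ((hgi.add (hdi d)).const_mul _) (Filter.Eventually.of_forall fun x => ?_)
    · have := gnorm_nonneg v x
      positivity
    · have hg := gnorm_nonneg v x
      have h1 := phiMinus_add_le (p := p) (q := q) h0 hp0.le hq0.le
        (by positivity : 0 ≤ 2 * gnorm v x) (by positivity : 0 ≤ 4 * |v x - d|)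
      have h2 : Ψ (2 * (2 * gnorm v x)) ≤ 8 ^ q * Ψ (gnorm v x) := by
        refine le_trans ?_ (phiMinus_mul_le hpq.le (by norm_num) hg)
        refine monotoneOn_phiMinus h0 hp0.le hq0.le ?_ ?_ (by linarith) <;> rw [mem_Ici] <;>
          positivity
      have h3 : Ψ (2 * (4 * |v x - d|)) ≤ 8 ^ q * Ψ |v x - d| := by
        refine le_trans (le_of_eq ?_) (phiMinus_mul_le hpq.le (by norm_num) (abs_nonneg _))
        rw [hΨ]
        ring_nf
      refine (h1.trans (add_le_add h2 h3)).trans ?_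
      rw [← mul_add]
  have hpoin := lintegral_lintegral_convex_abs_sub_le hv
    (convexOn_phiMinus (b := b) (O := B) h0 hp.le (hp.trans hpq).le) hΨc (monotoneOn_phiMinus h0 hp0.le hq0.le) hΨ0 hBm (convex_ball 0 1)
    (D := 2) (fun x hx y hy => (dist_triangle_right x y 0).trans
      (by linarith [mem_ball.1 hx, mem_ball.1 hy]))
  set I := ∫ x in B, Ψ (gnorm v x) with hI
  have hI0 : 0 ≤ I := integral_nonneg fun x => hΨ0 _ (gnorm_nonneg _ _)
  have hgrad : ∫⁻ x in B, ENNReal.ofReal (Ψ (2 * gnorm v x)) ≤ ENNReal.ofReal (2 ^ q * I) := by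
    rw [hI, ← integral_const_mul, ofReal_integral_eq_lintegral_ofReal (hgi.const_mul _)
      (Filter.Eventually.of_forall fun x => mul_nonneg (by positivity)
        (hΨ0 _ (gnorm_nonneg _ _)))]
    exact lintegral_mono fun x => ENNReal.ofReal_le_ofReal
      (phiMinus_mul_le hpq.le (by norm_num) (gnorm_nonneg _ _))
  have hV : volume B = ENNReal.ofReal (volume.real B) := (ENNReal.ofReal_toReal hBfin).symm
  have h2n : (2 : ENNReal) ^ n = ENNReal.ofReal (2 ^ n) := by
    rw [ENNReal.ofReal_pow (by norm_num)]; norm_num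
  have hV0 : 0 ≤ volume.real B := measureReal_nonneg
  rw [← ENNReal.ofReal_le_ofReal_iff (by positivity), ← integral_const_mul,
    ofReal_integral_eq_lintegral_ofReal (hvi.const_mul _)
      (Filter.Eventually.of_forall fun x => mul_nonneg hcfat.le (hΨ0 _ (abs_nonneg _)))]
  calc ∫⁻ y in B, ENNReal.ofReal (cfat * Ψ |v y|)
      ≤ ∫⁻ y in B, (ENNReal.ofReal (3 * 8 ^ q * I) +
          ENNReal.ofReal (3 * 8 ^ q) * ∫⁻ x in B, ENNReal.ofReal (Ψ |v x - v y|)) := by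
        refine lintegral_mono fun y => ?_
        rw [← ofReal_integral_eq_lintegral_ofReal (hdi (v y))
          (Filter.Eventually.of_forall fun x => hΨ0 _ (abs_nonneg _)),
          ← ENNReal.ofReal_mul (by positivity), ← ENNReal.ofReal_add (by positivity)
          (mul_nonneg (by positivity) (integral_nonneg fun x => hΨ0 _ (abs_nonneg _)))]
        exact ENNReal.ofReal_le_ofReal (hpt (v y))
    _ = ENNReal.ofReal (3 * 8 ^ q * I) * volume B + ENNReal.ofReal (3 * 8 ^ q) *
          ∫⁻ y in B, ∫⁻ x in B, ENNReal.ofReal (Ψ |v x - v y|) := by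
        rw [lintegral_add_left measurable_const, setLIntegral_const,
          lintegral_const_mul' _ _ ENNReal.ofReal_ne_top]
    _ ≤ ENNReal.ofReal (3 * 8 ^ q * I) * volume B + ENNReal.ofReal (3 * 8 ^ q) *
          (2 ^ n * volume B * ENNReal.ofReal (2 ^ q * I)) := by
        gcongr
        exact hpoin.trans (by gcongr)
    _ = _ := by
        rw [hV, h2n, ← ENNReal.ofReal_mul (by positivity), ← ENNReal.ofReal_mul (by positivity),
          ← ENNReal.ofReal_mul (by positivity), ← ENNReal.ofReal_mul (by positivity),
          ← ENNReal.ofReal_add (by positivity) (by positivity)]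
        congr 1
        ring

/-- The boundary Poincaré inequality on the unit ball. -/
lemma integral_phi_abs_le {n : ℕ} {b : En n → ℝ} {p q cfat : ℝ} {E : Set (En n)}
    (hp : 1 < p) (hpq : p < q) (hcfat : 0 < cfat) (hb : ∀ x, 0 ≤ b x) (hbm : Measurable b)
    (hb3 : ∀ x ∈ ball (0 : En n) 1, b x ≤ 3 * aInfOn b (ball 0 1))
    (hE : E ⊆ closedBall 0 (1 / 2)) (hfat : cfat ≤ capPhiInf b p q E (ball 0 1))
    {v : En n → ℝ} {K : NNReal} (hv : LipschitzWith K v) (hvE : ∀ x ∈ E, v x = 0) :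
    ∫ x in ball (0 : En n) 1, phi b p q x |v x| ≤
      poincareConst n q cfat * ∫ x in ball (0 : En n) 1, phi b p q x (gnorm v x) := by
  have hp0 : 0 < p := by linarith
  have hq0 : 0 < q := by linarith
  have h0 := aInfOn_nonneg hb (ball 0 1)
  have hmain := integral_phiMinus_abs_le hp hpq hcfat hb hb3 hE hfat hv hvE
  set B := ball (0 : En n) 1 with hB
  have hBm : MeasurableSet B := measurableSet_ball
  have hBfin : volume B ≠ ⊤ := measure_ball_lt_top.ne
  have hle : ∀ x ∈ B, ∀ t, 0 ≤ t → phi b p q x t ≤ 3 * phiMinus b p q B t := by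
    intro x hx t ht
    unfold phi phiMinus
    nlinarith [Real.rpow_nonneg ht p, mul_le_mul_of_nonneg_right (hb3 x hx) (Real.rpow_nonneg ht q)]
  have hvi : IntegrableOn (fun x => phiMinus b p q B |v x|) B :=
    integrableOn_phiMinus_comp h0 hp0.le hq0.le hBm hBfin (M := |v 0| + K)
      hv.continuous.measurable.abs (fun x _ => abs_nonneg _) fun x hx => by
        simpa using abs_sub_le_of_lipschitzWith_of_mem_closedBall hv 0 (ball_subset_closedBall hx)
  have hgi : IntegrableOn (fun x => phiMinus b p q B (gnorm v x)) B :=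
    integrableOn_phiMinus_comp h0 hp0.le hq0.le hBm hBfin (measurable_gnorm v)
      (fun x _ => gnorm_nonneg v x) (fun x _ => gnorm_le_of_lipschitzWith hv x)
  have hphii : IntegrableOn (fun x => phi b p q x (gnorm v x)) B := by
    refine (hgi.const_mul 3).mono' ?_ ?_
    · exact (((measurable_gnorm v).pow_const p).add
        (hbm.mul ((measurable_gnorm v).pow_const q))).aestronglyMeasurable
    · filter_upwards [ae_restrict_mem hBm] with x hx
      rw [Real.norm_of_nonneg (phi_nonneg (hb x) (gnorm_nonneg _ _))]
      exact hle x hx _ (gnorm_nonneg _ _)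
  have h1 : ∫ x in B, phi b p q x |v x| ≤ 3 * ∫ x in B, phiMinus b p q B |v x| := by
    rw [← integral_const_mul]
    refine integral_mono_of_nonneg
      (Filter.Eventually.of_forall fun x => phi_nonneg (hb x) (abs_nonneg _))
      (hvi.const_mul 3) ?_
    filter_upwards [ae_restrict_mem hBm] with x hx
    exact hle x hx _ (abs_nonneg _)
  have h2 : ∫ x in B, phiMinus b p q B (gnorm v x) ≤ ∫ x in B, phi b p q x (gnorm v x) := by
    refine integral_mono_of_nonneg
      (Filter.Eventually.of_forall fun x => phiMinus_nonneg h0 (gnorm_nonneg _ _)) hphii ?_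
    filter_upwards [ae_restrict_mem hBm] with x hx
    have : aInfOn b B ≤ b x :=
      csInf_le ⟨0, by rintro _ ⟨y, _, rfl⟩; exact hb y⟩ (mem_image_of_mem b hx)
    unfold phi phiMinus
    gcongr
    exact Real.rpow_nonneg (gnorm_nonneg v x) q
  have hC : 0 ≤ 3 * 8 ^ q * (1 + 2 ^ n * 2 ^ q) * volume.real B := by positivity
  calc ∫ x in B, phi b p q x |v x| ≤ 3 * ∫ x in B, phiMinus b p q B |v x| := h1
    _ ≤ 3 * (3 * 8 ^ q * (1 + 2 ^ n * 2 ^ q) * volume.real B *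
          (∫ x in B, phi b p q x (gnorm v x)) / cfat) := by
        gcongr
        rw [le_div_iff₀ hcfat, mul_comm]
        exact hmain.trans (mul_le_mul_of_nonneg_left h2 hC)
    _ = poincareConst n q cfat * ∫ x in B, phi b p q x (gnorm v x) := by
        rw [poincareConst]
        ring

lemma gnorm_comp_homothety {n : ℕ} (u : En n → ℝ) (z : En n) {r : ℝ} (hr : 0 ≤ r) (x : En n) :
    gnorm (fun x => u (z + r • x)) x = r * gnorm u (z + r • x) := by
  unfold gnorm
  rw [fderiv_comp_smul (f := fun y => u (z + y)), fderiv_comp_add_left, norm_smul,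
    Real.norm_of_nonneg hr]

lemma image_homothety_ball {n : ℕ} (z : En n) {r : ℝ} (hr : 0 < r) :
    (fun x => z + r • x) '' ball (0 : En n) 1 = ball z r := by
  rw [← affinity_unitBall hr z, ← image_smul, ← image_vadd, image_image]
  rfl

lemma setAverage_ball_eq {n : ℕ} (f : En n → ℝ) (z : En n) {r : ℝ} (hr : 0 < r) :
    ⨍ x in ball z r, f x =
      (volume.real (ball z r))⁻¹ * r ^ n * ∫ x in ball (0 : En n) 1, f (z + r • x) := by
  have h1 := (measurePreserving_add_left volume z).setIntegral_preimage_emb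
    (measurableEmbedding_addLeft z) f (ball z r)
  rw [preimage_add_ball, sub_self] at h1
  rw [setAverage_eq, Measure.setIntegral_comp_smul_of_pos volume (fun y => f (z + y)) _ hr,
    smul_unitBall_of_pos hr, h1, finrank_euclideanSpace_fin, smul_eq_mul, smul_eq_mul,
    mul_assoc, mul_inv_cancel_left₀ (by positivity)]

lemma continuous_of_abs_sub_le_mul_rpow {n : ℕ} {a : En n → ℝ} {A α : ℝ} (hα : 0 < α)
    (ha : ∀ x y, |a x - a y| ≤ A * dist x y ^ α) : Continuous a := by
  refine continuous_iff_continuousAt.2 fun x => tendsto_iff_dist_tendsto_zero.2 ?_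
  refine squeeze_zero (fun _ => dist_nonneg) (fun y => ha y x) ?_
  have : Continuous fun y => A * dist y x ^ α :=
    continuous_const.mul ((continuous_id.dist continuous_const).rpow_const fun _ => Or.inr hα.le)
  simpa [Real.zero_rpow hα.ne'] using this.tendsto x

lemma le_three_mul_aInfOn_ball {n : ℕ} {a : En n → ℝ} {A α r : ℝ} {z : En n} (hα : 0 ≤ α)
    (hα1 : α ≤ 1) (hA : 0 ≤ A) (hr : 0 < r)
    (ha : ∀ x y, |a x - a y| ≤ A * dist x y ^ α) (hphase : A * r ^ α ≤ aInfOn a (ball z r))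
    {x : En n} (hx : x ∈ ball z r) : a x ≤ 3 * aInfOn a (ball z r) := by
  suffices h : a x - 2 * aInfOn a (ball z r) ≤ aInfOn a (ball z r) by linarith
  refine le_csInf ⟨a x, mem_image_of_mem a hx⟩ ?_
  rintro _ ⟨y, hy, rfl⟩
  have hd : dist x y ≤ 2 * r := (dist_triangle_right x y z).trans
    (by linarith [mem_ball.1 hx, mem_ball.1 hy])
  have h2 : (2 : ℝ) ^ α ≤ 2 := by
    simpa using Real.rpow_le_rpow_of_exponent_le one_le_two hα1
  have h3 : dist x y ^ α ≤ 2 * r ^ α := by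
    refine (Real.rpow_le_rpow dist_nonneg hd hα).trans ?_
    rw [Real.mul_rpow zero_le_two hr.le]
    gcongr
  have h4 := (le_abs_self _).trans ((ha x y).trans (mul_le_mul_of_nonneg_left h3 hA))
  linarith

/-- **Boundary Poincaré inequality in the `(p,q)`-phase** (Remark 7.1): if
`ℝⁿ ∖ Ω` is locally uniformly infimally `φ`-fat and the ball `B(z,r)` is in the
`(p,q)`-phase, i.e. `inf_{B(z,r)} a > [a]_{0,α} r^α`, then
`⨍_{B(z,r)} φ(x,|u|) ≤ c ⨍_{B(z,r)} φ(x, r|∇u|)`. -/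
theorem pq_phase_boundary_poincare
    (n : ℕ) (hn : 0 < n) (p q cfat : ℝ)
    (hp : 1 < p) (hpq : p < q) (hcfat : 0 < cfat) :
    ∃ c : ℝ, 0 < c ∧
      ∀ (α A ro : ℝ) (a : En n → ℝ) (Ω : Set (En n)),
        0 < α → α ≤ 1 → (∀ x, 0 ≤ a x) → 0 ≤ A →
        (∀ x y, |a x - a y| ≤ A * dist x y ^ α) →
        q / p ≤ 1 + α / n →
        IsOpen Ω → 0 < ro → ro ≤ 1 →
        LocUnifPhiFat a p q Ωᶜ cfat ro →
        ∀ z ∈ Ωᶜ, ∀ r : ℝ, 0 < r → r < ro →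
          A * r ^ α < aInfOn a (ball z r) →
          ∀ u ∈ Lip0 Ω,
            (⨍ x in ball z r, phi a p q x |u x|) ≤
              c * (⨍ x in ball z r, phi a p q x (r * gnorm u x)) := by
  refine ⟨poincareConst n q cfat, poincareConst_pos n q hcfat, ?_⟩
  intro α A ro a Ω hα hα1 ha hA hHolder _ _ _ _ hfat z hz r hr hro hphase u hu
  obtain ⟨⟨K, hK⟩, -, hsupp⟩ := hu
  have hinf : aInfOn (fun x => a (z + r • x)) (ball 0 1) = aInfOn a (ball z r) := by
    unfold aInfOn
    rw [← image_homothety_ball z hr, image_image]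
  have hb3 : ∀ x ∈ ball (0 : En n) 1,
      a (z + r • x) ≤ 3 * aInfOn (fun x => a (z + r • x)) (ball 0 1) := fun x hx => by
    rw [hinf]
    refine le_three_mul_aInfOn_ball hα.le hα1 hA hr hHolder hphase.le ?_
    rw [← image_homothety_ball z hr]
    exact mem_image_of_mem _ hx
  have hdil : LipschitzWith ‖r‖₊ fun x : En n => z + r • x := by
    simpa using (LipschitzWith.const z).add (lipschitzWith_smul r)
  have hzero : ∀ x ∈ shiftedSet Ωᶜ z r, u (z + r • x) = 0 := fun x hx =>
    image_eq_zero_of_notMem_tsupport fun h => hx.2 (hsupp h)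
  have hunit := integral_phi_abs_le (v := fun x => u (z + r • x)) hp hpq hcfat
    (fun x => ha (z + r • x))
    ((continuous_of_abs_sub_le_mul_rpow hα hHolder).measurable.comp (by fun_prop)) hb3
    (fun x hx => hx.1) (hfat z hz r hr hro) (hK.comp hdil) hzero
  simp only [gnorm_comp_homothety u z hr.le] at hunit
  rw [setAverage_ball_eq _ z hr, setAverage_ball_eq _ z hr, mul_left_comm]
  exact mul_le_mul_of_nonneg_left hunit (by positivity)
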